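/- Let f : ℝ² → ℝ be twice continuously differentiable with ‖∇²f(y)‖ ≤ M_H and ‖∇²f(y₁) − ∇²f(y₂)‖ ≤ L_H ‖y₁ − y₂‖ for all y, y₁, y₂ ∈ ℝ². Let k₀, k₁, k₂ > 0, let r₁*, r₂* ∈ ℝ² be nonzero with the matrix R* (rows r₁*ᵀ, r₂*ᵀ) invertible, let rᵢ(t) = rᵢ* + (rᵢ(0) − rᵢ*) e^{−kᵢ t} with initial values satisfying r₁(0) = μ r₁* for some μ > 0 and cross(r₁*, r₂(0)), cross(r₁*, r₂*) nonzero of the same sign, let R(t) be the matrix with rows r₁(t)ᵀ, r₂(t)ᵀ, and let x₀ : [0,∞) → ℝ² be any function. Define φ₂(t) = (1/2) k₀ R(t)⁻¹ [ ∫₀¹ (1−ξ₁) ⟪r₁(t), ∇²f(x₀(t) + ξ₁ r₁(t)) r₁(t)⟫ dξ₁ ; ∫₀¹ (1−ξ₂) ⟪r₂(t), ∇²f(x₀(t) + ξ₂ r₂(t)) r₂(t)⟫ dξ₂ ] and φ₂*(t) = (1/2) k₀ R*⁻¹ [ ∫₀¹ (1−ξ₁) ⟪r₁*, ∇²f(x₀(t)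 + ξ₁ r₁*) r₁*⟫ dξ₁ ; ∫₀¹ (1−ξ₂) ⟪r₂*, ∇²f(x₀(t) + ξ₂ r₂*) r₂*⟫ dξ₂ ]. Then there exist ε, β > 0 such that ‖φ₂(t) − φ₂*(t)‖ ≤ ε e^{−β t} for all t ≥ 0. -/

import Mathlib

noncomputable section

open scoped RealInnerProductSpace

/-- The plane `ℝ²` with the Euclidean norm and inner product. -/
abbrev E2 : Type := EuclideanSpace ℝ (Fin 2)

/-- Action of a 2×2 matrix on a vector of `ℝ²`. -/
def matVec (M : Matrix (Fin 2) (Fin 2) ℝ) (v : E2) : E2 :=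
  (WithLp.equiv 2 (Fin 2 → ℝ)).symm (M.mulVec (WithLp.equiv 2 (Fin 2 → ℝ) v))

/-- The Hessian matrix of `f : ℝ² → ℝ` at `x`. -/
def hessM (f : E2 → ℝ) (x : E2) : Matrix (Fin 2) (Fin 2) ℝ :=
  Matrix.of fun i j =>
    fderiv ℝ (fun y => fderiv ℝ f y (EuclideanSpace.single j 1)) x (EuclideanSpace.single i 1)

/-- The operator (spectral) norm of a 2×2 matrix, induced by the Euclidean norm. -/
def l2OpNorm (M : Matrix (Fin 2) (Fin 2) ℝ) : ℝ :=
  ‖LinearMap.toContinuousLinearMap (Matrix.toEuclideanLin M)‖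

/-- The planar cross product `cross(u,v) = u₁v₂ − u₂v₁ = ‖u‖‖v‖ sin θ`. -/
def cross (u v : E2) : ℝ := u 0 * v 1 - u 1 * v 0

/-- The 2×2 matrix whose rows are `uᵀ` and `vᵀ`. -/
def rowMat (u v : E2) : Matrix (Fin 2) (Fin 2) ℝ :=
  Matrix.of ![WithLp.equiv 2 (Fin 2 → ℝ) u, WithLp.equiv 2 (Fin 2 → ℝ) v]

/-- The vector of `ℝ²` with entries `a, b`. -/
def vec2 (a b : ℝ) : E2 := (WithLp.equiv 2 (Fin 2 → ℝ)).symm ![a, b]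

/-! Write `R⁻¹ v - R*⁻¹ v* = (R⁻¹ - R*⁻¹) v + R*⁻¹ (v - v*)`, where `v` and `v*` collect the Taylor
remainders along the actual and the desired formation. A bounded Lipschitz Hessian makes the
remainder Lipschitz in the displacement on bounded sets, uniformly in the base point, so `v - v*`
decays as fast as the formation error. The same rate passes to `R⁻¹ - R*⁻¹ = R⁻¹ (R* - R) R*⁻¹`
because `R⁻¹` is bounded on `[0, ∞)`: it is continuous there and converges to `R*⁻¹`. In the plane,
`cross r₁ r₂` is a convex combination of `1` and `μ` times a convex combination of `cross r₁* r₂*`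
and `cross r₁* r₂(0)`, so it never vanishes. -/

open Asymptotics Filter Set Topology
open scoped NNReal

section Asymptotics

variable {α : Type*} {l : Filter α} {g : α → ℝ}

lemma isBigO_clm_apply_sub {E F : Type*} [SeminormedAddCommGroup E] [NormedSpace ℝ E]
    [SeminormedAddCommGroup F] [NormedSpace ℝ F] {S T : α → E →L[ℝ] F} {v w : α → E}
    (hT : T =O[l] (1 : α → ℝ)) (hv : v =O[l] (1 : α → ℝ))
    (hST : (fun t => S t - T t) =O[l] g) (hvw : (fun t => v t - w t) =O[l] g) :
    (fun t => S t (v t) - T t (w t)) =O[l] g := by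
  have isBigO_apply {A : α → E →L[ℝ] F} {u : α → E} :
      (fun t => A t (u t)) =O[l] fun t => ‖A t‖ * ‖u t‖ :=
    .of_norm_le fun t => (A t).le_opNorm (u t)
  have h₁ : (fun t => (S t - T t) (v t)) =O[l] g := by
    simpa using isBigO_apply.trans (hST.norm_left.mul hv.norm_left)
  have h₂ : (fun t => T t (v t - w t)) =O[l] g := by
    simpa using isBigO_apply.trans (hT.norm_left.mul hvw.norm_left)
  simpa using h₁.add h₂

lemma isBigO_ringInverse_sub {𝔸 : Type*} [SeminormedRing 𝔸] {A B : α → 𝔸}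
    (hunit : ∀ᶠ t in l, IsUnit (A t) ↔ IsUnit (B t))
    (hA : (fun t => Ring.inverse (A t)) =O[l] (1 : α → ℝ))
    (hB : (fun t => Ring.inverse (B t)) =O[l] (1 : α → ℝ))
    (hAB : (fun t => A t - B t) =O[l] g) :
    (fun t => Ring.inverse (A t) - Ring.inverse (B t)) =O[l] g := by
  have hBA : (fun t => B t - A t) =O[l] g := by simpa using hAB.neg_left
  refine IsBigO.congr' ((hA.mul hBA).mul hB) ?_ (by simp)
  filter_upwards [hunit] with t ht
  exact (Ring.inverse_sub_inverse ht).symm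

lemma isBigO_of_isBigO_apply {ι : Type*} [Fintype ι] {v : α → EuclideanSpace ℝ ι}
    (hv : ∀ i, (fun t => v t i) =O[l] g) : v =O[l] g :=
  ((EuclideanSpace.equiv ι ℝ).isBigO_comp_rev v l).trans (isBigO_pi.2 hv)

lemma isBigO_one_principal_Ici {F : Type*} [SeminormedAddCommGroup F] {u : ℝ → F} {a : ℝ} {b : F}
    (hu : ContinuousOn u (Ici a)) (hlim : Tendsto u atTop (𝓝 b)) :
    u =O[𝓟 (Ici a)] (1 : ℝ → ℝ) := by
  obtain ⟨C, hC⟩ := (hlim.isBigO_one ℝ).bound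
  obtain ⟨T, hT⟩ := eventually_atTop.1 hC
  have hIcc : u =O[𝓟 (Icc a T)] (1 : ℝ → ℝ) :=
    (hu.mono Icc_subset_Ici_self).isBigO_principal isCompact_Icc (c := (1 : ℝ)) (by simp)
  have hIci : u =O[𝓟 (Ici T)] (1 : ℝ → ℝ) := isBigO_principal.2 ⟨C, hT⟩
  refine (hIcc.sup hIci).mono ?_
  rw [sup_principal, principal_mono]
  exact Ici_subset_Icc_union_Ici

end Asymptotics

section TaylorRemainder

variable {E : Type*} [NormedAddCommGroup E] [InnerProductSpace ℝ E]

/-- The integral remainder of the first-order Taylor expansion at `x` along the displacement `r` of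
a function whose Hessian is `H`. Any field of operators is allowed as `H`. -/
def taylorRemainder (H : E → E →L[ℝ] E) (x r : E) : ℝ :=
  ∫ ξ in (0 : ℝ)..1, (1 - ξ) * ⟪r, H (x + ξ • r) r⟫

@[simp]
lemma taylorRemainder_zero (H : E → E →L[ℝ] E) (x : E) : taylorRemainder H x 0 = 0 := by
  simp [taylorRemainder]

lemma abs_integral_one_sub_mul_le {q : ℝ → ℝ} {C : ℝ} (hq : ∀ ξ ∈ Icc (0 : ℝ) 1, |q ξ| ≤ C) :
    |∫ ξ in (0 : ℝ)..1, (1 - ξ) * q ξ| ≤ C / 2 := by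
  have hle : ∀ ξ ∈ Ioc (0 : ℝ) 1, ‖(1 - ξ) * q ξ‖ ≤ (1 - ξ) * C := fun ξ hξ => by
    have h1 : 0 ≤ 1 - ξ := sub_nonneg.2 hξ.2
    rw [norm_mul, Real.norm_of_nonneg h1]
    exact mul_le_mul_of_nonneg_left (hq ξ ⟨hξ.1.le, hξ.2⟩) h1
  have hcont : Continuous fun ξ : ℝ => (1 - ξ) * C := by fun_prop
  calc |∫ ξ in (0 : ℝ)..1, (1 - ξ) * q ξ|
      ≤ ∫ ξ in (0 : ℝ)..1, (1 - ξ) * C :=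
        intervalIntegral.norm_integral_le_of_norm_le zero_le_one (.of_forall hle)
          (hcont.intervalIntegrable 0 1)
    _ = C / 2 := by
        rw [intervalIntegral.integral_mul_const, intervalIntegral.integral_sub (by simp) (by simp),
          intervalIntegral.integral_const, integral_id, smul_eq_mul]
        ring

lemma abs_inner_apply_sub_inner_apply_le (A B : E →L[ℝ] E) (r s : E) :
    |⟪r, A r⟫ - ⟪s, B s⟫| ≤ ‖A‖ * (‖r‖ + ‖s‖) * ‖r - s‖ + ‖A - B‖ * ‖s‖ ^ 2 := by
  have inner_apply_le (T : E →L[ℝ] E) (u v : E) : |⟪u, T v⟫| ≤ ‖u‖ * (‖T‖ * ‖v‖) :=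
    (abs_real_inner_le_norm u (T v)).trans (by gcongr; exact T.le_opNorm v)
  calc |⟪r, A r⟫ - ⟪s, B s⟫|
      = |⟪r - s, A r⟫ + ⟪s, A (r - s)⟫ + ⟪s, (A - B) s⟫| := by
        rw [map_sub, sub_apply, inner_sub_left, inner_sub_right, inner_sub_right]
        ring_nf
    _ ≤ |⟪r - s, A r⟫| + |⟪s, A (r - s)⟫| + |⟪s, (A - B) s⟫| := abs_add_three _ _ _
    _ ≤ ‖r - s‖ * (‖A‖ * ‖r‖) + ‖s‖ * (‖A‖ * ‖r - s‖) + ‖s‖ * (‖A - B‖ * ‖s‖) := by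
        gcongr <;> exact inner_apply_le _ _ _
    _ = ‖A‖ * (‖r‖ + ‖s‖) * ‖r - s‖ + ‖A - B‖ * ‖s‖ ^ 2 := by ring

variable {H : E → E →L[ℝ] E} {M : ℝ} {L : ℝ≥0}

lemma intervalIntegrable_taylorRemainder (hH : Continuous H) (x r : E) :
    IntervalIntegrable (fun ξ : ℝ => (1 - ξ) * ⟪r, H (x + ξ • r) r⟫) MeasureTheory.volume 0 1 :=
  Continuous.intervalIntegrable (by fun_prop) 0 1

lemma abs_taylorRemainder_sub_le (hM : ∀ y, ‖H y‖ ≤ M) (hL : LipschitzWith L H) (x r s : E) :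
    |taylorRemainder H x r - taylorRemainder H x s| ≤
      (M * (‖r‖ + ‖s‖) + L * ‖s‖ ^ 2) / 2 * ‖r - s‖ := by
  have hH_sub {ξ : ℝ} (hξ : ξ ∈ Icc (0 : ℝ) 1) :
      ‖H (x + ξ • r) - H (x + ξ • s)‖ ≤ L * ‖r - s‖ := by
    refine (hL.norm_sub_le _ _).trans ?_
    rw [add_sub_add_left_eq_sub, ← smul_sub, norm_smul, Real.norm_of_nonneg hξ.1]
    gcongr
    exact mul_le_of_le_one_left (norm_nonneg _) hξ.2
  have hq : ∀ ξ ∈ Icc (0 : ℝ) 1, |⟪r, H (x + ξ • r) r⟫ - ⟪s, H (x + ξ • s) s⟫| ≤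
      M * (‖r‖ + ‖s‖) * ‖r - s‖ + L * ‖r - s‖ * ‖s‖ ^ 2 := fun ξ hξ => by
    refine (abs_inner_apply_sub_inner_apply_le _ _ r s).trans ?_
    gcongr
    exacts [hM _, hH_sub hξ]
  calc |taylorRemainder H x r - taylorRemainder H x s|
      = |∫ ξ in (0 : ℝ)..1, (1 - ξ) * (⟪r, H (x + ξ • r) r⟫ - ⟪s, H (x + ξ • s) s⟫)| := by
        simp only [taylorRemainder, mul_sub]
        rw [intervalIntegral.integral_sub (intervalIntegrable_taylorRemainder hL.continuous x r)
          (intervalIntegrable_taylorRemainder hL.continuous x s)]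
    _ ≤ (M * (‖r‖ + ‖s‖) * ‖r - s‖ + L * ‖r - s‖ * ‖s‖ ^ 2) / 2 := abs_integral_one_sub_mul_le hq
    _ = (M * (‖r‖ + ‖s‖) + L * ‖s‖ ^ 2) / 2 * ‖r - s‖ := by ring

variable {α : Type*} {l : Filter α} {g : α → ℝ} {x r s : α → E}

lemma isBigO_taylorRemainder_sub (hM : ∀ y, ‖H y‖ ≤ M) (hL : LipschitzWith L H)
    (hr : r =O[l] (1 : α → ℝ)) (hs : s =O[l] (1 : α → ℝ))
    (hrs : (fun t => r t - s t) =O[l] g) :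
    (fun t => taylorRemainder H (x t) (r t) - taylorRemainder H (x t) (s t)) =O[l] g := by
  have hcoeff : (fun t => M * (‖r t‖ + ‖s t‖) + L * ‖s t‖ ^ 2) =O[l] (1 : α → ℝ) := by
    have hsq : (fun t => ‖s t‖ ^ 2) =O[l] (1 : α → ℝ) := by
      simpa only [Pi.one_apply, one_pow, Pi.one_def] using hs.norm_left.pow 2
    exact ((hr.norm_left.add hs.norm_left).const_mul_left M).add (hsq.const_mul_left (L : ℝ))
  have hbound : (fun t => (M * (‖r t‖ + ‖s t‖) + L * ‖s t‖ ^ 2) / 2 * ‖r t - s t‖) =O[l] g := by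
    simpa [div_eq_inv_mul] using (hcoeff.const_mul_left 2⁻¹).mul hrs.norm_left
  exact (IsBigO.of_norm_le fun t => abs_taylorRemainder_sub_le hM hL _ _ _).trans hbound

lemma isBigO_taylorRemainder_one (hM : ∀ y, ‖H y‖ ≤ M) (hL : LipschitzWith L H)
    (hr : r =O[l] (1 : α → ℝ)) :
    (fun t => taylorRemainder H (x t) (r t)) =O[l] (1 : α → ℝ) := by
  simpa using isBigO_taylorRemainder_sub (x := x) hM hL hr (isBigO_zero 1 l) (by simpa using hr)

end TaylorRemainder

section Formation

variable {ι F : Type*}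

/-- The formation at time `t`: the relative position of agent `i` converges from `r₀ i` to the
desired `rs i` at the exponential rate `k i`. -/
def formation [AddCommGroup F] [Module ℝ F] (k : ι → ℝ) (rs r₀ : ι → F) (t : ℝ) (i : ι) : F :=
  rs i + Real.exp (-(k i * t)) • (r₀ i - rs i)

variable [SeminormedAddCommGroup F] [NormedSpace ℝ F] {k : ι → ℝ} {rs r₀ : ι → F}

lemma continuous_formation : Continuous (formation k rs r₀) := by
  unfold formation
  fun_prop

lemma tendsto_formation (hk : ∀ i, 0 < k i) :
    Tendsto (formation k rs r₀) atTop (𝓝 rs) := by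
  refine tendsto_pi_nhds.2 fun i => ?_
  have hexp : Tendsto (fun t => Real.exp (-(k i * t))) atTop (𝓝 0) :=
    Real.tendsto_exp_neg_atTop_nhds_zero.comp (tendsto_id.const_mul_atTop (hk i))
  simpa [formation] using (hexp.smul_const (r₀ i - rs i)).const_add (rs i)

lemma isBigO_formation_sub {β : ℝ} {i : ι} (hβ : β ≤ k i) :
    (fun t => formation k rs r₀ t i - rs i) =O[𝓟 (Ici 0)] fun t => Real.exp (-(β * t)) := by
  refine isBigO_principal.2 ⟨‖r₀ i - rs i‖, fun t (ht : 0 ≤ t) => ?_⟩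
  rw [formation, add_sub_cancel_left, norm_smul, mul_comm, Real.norm_eq_abs, Real.norm_eq_abs,
    Real.abs_exp, Real.abs_exp]
  gcongr

end Formation

section UncertaintyInput

open scoped Matrix.Norms.L2Operator

variable {ι : Type*} [Fintype ι]

/-- The formation matrix `R`, whose `i`-th row is the relative position `r i`, as a continuous
linear function of the relative positions. -/
def formationMatrix : (ι → EuclideanSpace ℝ ι) →L[ℝ] Matrix ι ι ℝ where
  toFun r := Matrix.of fun i j => r i j
  map_add' _ _ := rfl
  map_smul' _ _ := rfl
  cont := continuous_matrix fun i j => by fun_prop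

variable [DecidableEq ι]

/-- The uncertainty input `φ₂` at the base point `x` for the relative positions `r`, with gain `k₀`
and Hessian field `H`. -/
def uncertaintyInput (k₀ : ℝ) (H : EuclideanSpace ℝ ι → EuclideanSpace ℝ ι →L[ℝ] EuclideanSpace ℝ ι)
    (x : EuclideanSpace ℝ ι) (r : ι → EuclideanSpace ℝ ι) : EuclideanSpace ℝ ι :=
  ((1 / 2) * k₀) • Matrix.toEuclideanCLM (𝕜 := ℝ) (formationMatrix r)⁻¹
    (WithLp.toLp 2 fun i => taylorRemainder H x (r i))

variable {H : EuclideanSpace ℝ ι → EuclideanSpace ℝ ι →L[ℝ] EuclideanSpace ℝ ι} {M : ℝ} {L : ℝ≥0}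

lemma isBigO_toEuclideanCLM {α : Type*} (A : α → Matrix ι ι ℝ) (l : Filter α) :
    (fun t => Matrix.toEuclideanCLM (𝕜 := ℝ) (A t)) =O[l] A :=
  isBigO_of_le l fun t => (Matrix.l2_opNorm_toEuclideanCLM (A t)).le

lemma isBigO_uncertaintyInput_sub {α : Type*} {l : Filter α} {g : α → ℝ}
    {x : α → EuclideanSpace ℝ ι} {r s : α → ι → EuclideanSpace ℝ ι}
    (hM : ∀ y, ‖H y‖ ≤ M) (hL : LipschitzWith L H) (k₀ : ℝ)
    (hunit : ∀ᶠ t in l, IsUnit (formationMatrix (r t)) ↔ IsUnit (formationMatrix (s t)))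
    (hrinv : (fun t => (formationMatrix (r t))⁻¹) =O[l] (1 : α → ℝ))
    (hsinv : (fun t => (formationMatrix (s t))⁻¹) =O[l] (1 : α → ℝ))
    (hr : r =O[l] (1 : α → ℝ)) (hs : s =O[l] (1 : α → ℝ))
    (hrs : (fun t => r t - s t) =O[l] g) :
    (fun t => uncertaintyInput k₀ H (x t) (r t) - uncertaintyInput k₀ H (x t) (s t)) =O[l] g := by
  have hmatrix : (fun t => formationMatrix (r t) - formationMatrix (s t)) =O[l] g := by
    simpa only [map_sub] using (formationMatrix.isBigO_comp (fun t => r t - s t) l).trans hrs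
  have hinv : (fun t => (formationMatrix (r t))⁻¹ - (formationMatrix (s t))⁻¹) =O[l] g := by
    simp only [Matrix.nonsing_inv_eq_ringInverse] at hrinv hsinv ⊢
    exact isBigO_ringInverse_sub hunit hrinv hsinv hmatrix
  have hrem : (fun t => WithLp.toLp 2 fun i => taylorRemainder H (x t) (r t i)) =O[l]
      (1 : α → ℝ) :=
    isBigO_of_isBigO_apply fun i => isBigO_taylorRemainder_one hM hL (isBigO_pi.1 hr i)
  have hrem_sub : (fun t => WithLp.toLp 2 (fun i => taylorRemainder H (x t) (r t i)) -
      WithLp.toLp 2 fun i => taylorRemainder H (x t) (s t i)) =O[l] g :=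
    isBigO_of_isBigO_apply fun i => isBigO_taylorRemainder_sub hM hL (isBigO_pi.1 hr i)
      (isBigO_pi.1 hs i) (isBigO_pi.1 hrs i)
  have hinv_clm : (fun t => Matrix.toEuclideanCLM (𝕜 := ℝ) (formationMatrix (r t))⁻¹ -
      Matrix.toEuclideanCLM (𝕜 := ℝ) (formationMatrix (s t))⁻¹) =O[l] g := by
    simpa only [map_sub] using (isBigO_toEuclideanCLM _ l).trans hinv
  have happly := isBigO_clm_apply_sub ((isBigO_toEuclideanCLM _ l).trans hsinv) hrem hinv_clm
    hrem_sub
  simpa only [uncertaintyInput, smul_sub, Pi.smul_def] using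
    happly.const_smul_left ((1 / 2) * k₀)

lemma isBigO_inv_formationMatrix {k : ι → ℝ} {rs r₀ : ι → EuclideanSpace ℝ ι}
    (hk : ∀ i, 0 < k i) (hRs : IsUnit (formationMatrix rs))
    (hR : ∀ t ≥ 0, IsUnit (formationMatrix (formation k rs r₀ t))) :
    (fun t => (formationMatrix (formation k rs r₀ t))⁻¹) =O[𝓟 (Ici 0)] (1 : ℝ → ℝ) := by
  have continuousAt_inv {A : Matrix ι ι ℝ} (hA : IsUnit A) : ContinuousAt Inv.inv A :=
    continuousAt_matrix_inv A
      (NormedRing.inverse_continuousAt ((Matrix.isUnit_iff_isUnit_det A).1 hA).unit)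
  have hcont : Continuous fun t => formationMatrix (formation k rs r₀ t) :=
    formationMatrix.continuous.comp continuous_formation
  have hlim : Tendsto (fun t => formationMatrix (formation k rs r₀ t)) atTop
      (𝓝 (formationMatrix rs)) :=
    (formationMatrix.continuous.tendsto rs).comp (tendsto_formation hk)
  have hinv_cont : ContinuousOn (fun t => (formationMatrix (formation k rs r₀ t))⁻¹) (Ici 0) :=
    fun t ht => (continuousAt_inv (hR t ht)).comp_continuousWithinAt
      (f := fun t => formationMatrix (formation k rs r₀ t)) hcont.continuousWithinAt
  exact isBigO_one_principal_Ici hinv_cont ((continuousAt_inv hRs).tendsto.comp hlim)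

theorem stmt16_general (hM : ∀ y, ‖H y‖ ≤ M) (hL : LipschitzWith L H) (k₀ : ℝ)
    {k : ι → ℝ} (hk : ∀ i, 0 < k i) {rs r₀ : ι → EuclideanSpace ℝ ι}
    (hRs : IsUnit (formationMatrix rs))
    (hR : ∀ t ≥ 0, IsUnit (formationMatrix (formation k rs r₀ t))) (x₀ : ℝ → EuclideanSpace ℝ ι) :
    ∃ ε > (0 : ℝ), ∃ β > (0 : ℝ), ∀ t ≥ (0 : ℝ),
      ‖uncertaintyInput k₀ H (x₀ t) (formation k rs r₀ t) - uncertaintyInput k₀ H (x₀ t) rs‖ ≤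
        ε * Real.exp (-(β * t)) := by
  obtain ⟨β, hβ, hβk⟩ := Pi.exists_forall_pos_add_lt (x := 0) hk
  have hr_sub : (fun t => formation k rs r₀ t - rs) =O[𝓟 (Ici 0)] fun t => Real.exp (-(β * t)) :=
    isBigO_pi.2 fun i => isBigO_formation_sub (by simpa using (hβk i).le)
  have hr : formation k rs r₀ =O[𝓟 (Ici 0)] (1 : ℝ → ℝ) :=
    isBigO_one_principal_Ici continuous_formation.continuousOn (tendsto_formation hk)
  have hunit : ∀ᶠ t in 𝓟 (Ici (0 : ℝ)),
      IsUnit (formationMatrix (formation k rs r₀ t)) ↔ IsUnit (formationMatrix rs) :=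
    eventually_principal.2 fun t ht => iff_of_true (hR t ht) hRs
  obtain ⟨ε, hε, hbound⟩ := (isBigO_uncertaintyInput_sub (x := x₀) hM hL k₀ hunit
    (isBigO_inv_formationMatrix hk hRs hR) (isBigO_const_one ℝ _ _) hr (isBigO_const_one ℝ _ _)
    hr_sub).exists_pos
  exact ⟨ε, hε, β, hβ, fun t ht => by simpa using isBigOWith_principal.1 hbound t ht⟩

end UncertaintyInput

section Plane

lemma isUnit_rowMat_iff (u v : E2) : IsUnit (rowMat u v) ↔ cross u v ≠ 0 := by
  simp [Matrix.isUnit_iff_isUnit_det, Matrix.det_fin_two, rowMat, cross]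

lemma cross_smul_left (c : ℝ) (u v : E2) : cross (c • u) v = c * cross u v := by
  simp only [cross, PiLp.smul_apply, smul_eq_mul]
  ring

lemma cross_add_smul_sub_right (u v w : E2) (c : ℝ) :
    cross u (v + c • (w - v)) = cross u v + c * (cross u w - cross u v) := by
  simp only [cross, PiLp.add_apply, PiLp.smul_apply, PiLp.sub_apply, smul_eq_mul]
  ring

lemma add_mul_sub_pos {p q c : ℝ} (hp : 0 < p) (hq : 0 < q) (hc : c ∈ Icc (0 : ℝ) 1) :
    0 < p + c * (q - p) :=
  (convex_Ioi (0 : ℝ)).add_smul_sub_mem hp hq hc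

lemma exp_neg_mul_mem_Icc {k t : ℝ} (hk : 0 ≤ k) (ht : 0 ≤ t) :
    Real.exp (-(k * t)) ∈ Icc (0 : ℝ) 1 :=
  ⟨(Real.exp_pos _).le, Real.exp_le_one_iff.2 (neg_nonpos.2 (mul_nonneg hk ht))⟩

lemma isUnit_rowMat_of_cross_mul_pos {u v v₀ : E2} {μ a b : ℝ} (hμ : 0 < μ)
    (hsign : 0 < cross u v₀ * cross u v) (ha : a ∈ Icc (0 : ℝ) 1) (hb : b ∈ Icc (0 : ℝ) 1) :
    IsUnit (rowMat (u + a • (μ • u - u)) (v + b • (v₀ - v))) := by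
  have hscale : u + a • (μ • u - u) = (1 + a * (μ - 1)) • u := by module
  have hconvex : 0 < (cross u v + b * (cross u v₀ - cross u v)) * cross u v := by
    have := add_mul_sub_pos (mul_self_pos.2 (right_ne_zero_of_mul hsign.ne')) hsign hb
    linarith
  rw [isUnit_rowMat_iff, hscale, cross_smul_left, cross_add_smul_sub_right]
  exact mul_ne_zero (add_mul_sub_pos one_pos hμ ha).ne' (left_ne_zero_of_mul hconvex.ne')

lemma formationMatrix_pair (u v : E2) : formationMatrix ![u, v] = rowMat u v := by
  ext i j
  fin_cases i <;> rfl

lemma formation_pair (k₁ k₂ : ℝ) (r₁s r₂s r₁0 r₂0 : E2) (t : ℝ) :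
    formation ![k₁, k₂] ![r₁s, r₂s] ![r₁0, r₂0] t =
      ![r₁s + Real.exp (-(k₁ * t)) • (r₁0 - r₁s), r₂s + Real.exp (-(k₂ * t)) • (r₂0 - r₂s)] := by
  ext i : 1
  fin_cases i <;> rfl

lemma isUnit_formationMatrix_formation_pair {k₁ k₂ μ t : ℝ} {u v v₀ : E2} (hk₁ : 0 ≤ k₁)
    (hk₂ : 0 ≤ k₂) (hμ : 0 < μ) (hsign : 0 < cross u v₀ * cross u v) (ht : 0 ≤ t) :
    IsUnit (formationMatrix (formation ![k₁, k₂] ![u, v] ![μ • u, v₀] t)) := by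
  rw [formation_pair, formationMatrix_pair]
  exact isUnit_rowMat_of_cross_mul_pos hμ hsign (exp_neg_mul_mem_Icc hk₁ ht)
    (exp_neg_mul_mem_Icc hk₂ ht)

/-- The Hessian matrix of `f` as an operator on the plane. -/
def hessCLM (f : E2 → ℝ) (y : E2) : E2 →L[ℝ] E2 :=
  Matrix.toEuclideanCLM (𝕜 := ℝ) (hessM f y)

lemma lipschitzWith_hessCLM {f : E2 → ℝ} {L : ℝ}
    (hL : ∀ y₁ y₂ : E2, l2OpNorm (hessM f y₁ - hessM f y₂) ≤ L * ‖y₁ - y₂‖) :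
    LipschitzWith L.toNNReal (hessCLM f) :=
  .of_dist_le' fun y₁ y₂ => by
    rw [dist_eq_norm, dist_eq_norm, hessCLM, hessCLM, ← map_sub]
    exact hL y₁ y₂

lemma uncertaintyInput_hessCLM_pair (k₀ : ℝ) (f : E2 → ℝ) (x u v : E2) :
    uncertaintyInput k₀ (hessCLM f) x ![u, v] = ((1 / 2) * k₀) • matVec (rowMat u v)⁻¹
      (vec2 (∫ ξ in (0 : ℝ)..1, (1 - ξ) * ⟪u, matVec (hessM f (x + ξ • u)) u⟫)
            (∫ ξ in (0 : ℝ)..1, (1 - ξ) * ⟪v, matVec (hessM f (x + ξ • v)) v⟫)) := by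
  have hvec : (fun i => taylorRemainder (hessCLM f) x (![u, v] i)) =
      ![taylorRemainder (hessCLM f) x u, taylorRemainder (hessCLM f) x v] := by
    ext i
    fin_cases i <;> rfl
  rw [uncertaintyInput, formationMatrix_pair, hvec]
  rfl

end Plane

/-- exponential decay of the uncertainty input `φ₃ = φ₂ − φ₂*`.
Under the stated Hessian bounds, formation initial conditions and exponential formation
convergence, the difference between the uncertainty input `φ₂(t)` (computed along the
actual formation `R(t)`) and `φ₂*(t)` (computed at the desired formation `R*`) decays
exponentially: there are `ε, β > 0` with `‖φ₂(t) − φ₂*(t)‖ ≤ ε e^{−βt}` for all `t ≥ 0`. -/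
theorem stmt16 (f : E2 → ℝ) (hf : ContDiff ℝ 2 f)
    (M_H : ℝ) (hMH : ∀ y : E2, l2OpNorm (hessM f y) ≤ M_H)
    (L_H : ℝ) (hLH : ∀ y₁ y₂ : E2, l2OpNorm (hessM f y₁ - hessM f y₂) ≤ L_H * ‖y₁ - y₂‖)
    (k₀ k₁ k₂ : ℝ) (hk₀ : 0 < k₀) (hk₁ : 0 < k₁) (hk₂ : 0 < k₂)
    (r₁s r₂s : E2) (hr₁s : r₁s ≠ 0) (hr₂s : r₂s ≠ 0)
    (Rs : Matrix (Fin 2) (Fin 2) ℝ) (hRs : Rs = rowMat r₁s r₂s) (hRsUnit : IsUnit Rs)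
    (r₁0 r₂0 : E2) (μ : ℝ) (hμ : 0 < μ) (hdir : r₁0 = μ • r₁s)
    (hsign : 0 < cross r₁s r₂0 * cross r₁s r₂s)
    (r₁ r₂ : ℝ → E2)
    (hr₁ : ∀ t : ℝ, r₁ t = r₁s + Real.exp (-(k₁ * t)) • (r₁0 - r₁s))
    (hr₂ : ∀ t : ℝ, r₂ t = r₂s + Real.exp (-(k₂ * t)) • (r₂0 - r₂s))
    (R : ℝ → Matrix (Fin 2) (Fin 2) ℝ) (hR : ∀ t : ℝ, R t = rowMat (r₁ t) (r₂ t))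
    (x₀ : ℝ → E2)
    (φ₂ φ₂s : ℝ → E2)
    (hφ₂ : ∀ t : ℝ, φ₂ t = ((1 / 2) * k₀) • matVec (R t)⁻¹
      (vec2 (∫ ξ in (0 : ℝ)..1, (1 - ξ) * ⟪r₁ t, matVec (hessM f (x₀ t + ξ • r₁ t)) (r₁ t)⟫)
            (∫ ξ in (0 : ℝ)..1, (1 - ξ) * ⟪r₂ t, matVec (hessM f (x₀ t + ξ • r₂ t)) (r₂ t)⟫)))
    (hφ₂s : ∀ t : ℝ, φ₂s t = ((1 / 2) * k₀) • matVec Rs⁻¹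
      (vec2 (∫ ξ in (0 : ℝ)..1, (1 - ξ) * ⟪r₁s, matVec (hessM f (x₀ t + ξ • r₁s)) r₁s⟫)
            (∫ ξ in (0 : ℝ)..1, (1 - ξ) * ⟪r₂s, matVec (hessM f (x₀ t + ξ • r₂s)) r₂s⟫))) :
    ∃ ε > (0 : ℝ), ∃ β > (0 : ℝ), ∀ t ≥ (0 : ℝ),
      ‖φ₂ t - φ₂s t‖ ≤ ε * Real.exp (-(β * t)) := by
  subst hRs hdir
  simpa only [hφ₂, hφ₂s, hR, hr₁, hr₂, formation_pair, uncertaintyInput_hessCLM_pair] using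
    stmt16_general (H := hessCLM f) hMH (lipschitzWith_hessCLM hLH) k₀ (k := ![k₁, k₂])
      (Fin.forall_fin_two.2 ⟨hk₁, hk₂⟩) (by rwa [formationMatrix_pair])
      (fun _ => isUnit_formationMatrix_formation_pair hk₁.le hk₂.le hμ hsign) x₀
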